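/- arXiv:1910.10976 — 3 statements merged into one kernel-verified Lean document; each statement's English description precedes it below -/
import Mathlib

section
/- Let A ∈ ℝ^{m×n} have unit ℓ₂-norm columns and satisfy the RIP of order K+1 with constant δ ≤ 1/2. Let x ∈ ℝ^n be K-sparse with support S = supp(x), let S' be a proper subset of S, and set r = P_{S'}^⊥ A x. Then for every j ∈ {1,…,n} \ S, |⟨r, a_j⟩| / ‖P_{S'}^⊥ a_j‖₂ ≤ δ · ‖r‖₂² / ‖x_{S\S'}‖₂. -/
open Finset

noncomputable section

/-- The support of a vector as a `Finset`. -/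
def vsupp {n : ℕ} (x : Fin n → ℝ) : Finset (Fin n) :=
  Finset.univ.filter (fun i => x i ≠ 0)

/-- `A` satisfies the restricted isometry property of order `r` with constant `δ`. -/
def RIP {m n : ℕ} (A : Matrix (Fin m) (Fin n) ℝ) (r : ℕ) (δ : ℝ) : Prop :=
  ∀ x : Fin n → ℝ, (vsupp x).card ≤ r →
    (1 - δ) * (∑ i, x i ^ 2) ≤ (∑ i, (A.mulVec x) i ^ 2) ∧
      (∑ i, (A.mulVec x) i ^ 2) ≤ (1 + δ) * (∑ i, x i ^ 2)

/-- The `j`-th column of `A`. -/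
def col {m n : ℕ} (A : Matrix (Fin m) (Fin n) ℝ) (j : Fin n) : Fin m → ℝ :=
  fun i => A i j

/-- Euclidean dot product. -/
def dot {m : ℕ} (u v : Fin m → ℝ) : ℝ := ∑ i, u i * v i

/-- Squared Euclidean norm. -/
def nsq {m : ℕ} (v : Fin m → ℝ) : ℝ := ∑ i, v i ^ 2

/-- Euclidean norm. -/
def enorm {m : ℕ} (v : Fin m → ℝ) : ℝ := Real.sqrt (nsq v)

/-- Squared norm of the restriction of `x` to `T`. -/
def rsq {n : ℕ} (x : Fin n → ℝ) (T : Finset (Fin n)) : ℝ := ∑ i ∈ T, x i ^ 2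

/-- Norm of the restriction of `x` to `T`. -/
def rnorm {n : ℕ} (x : Fin n → ℝ) (T : Finset (Fin n)) : ℝ := Real.sqrt (rsq x T)

/-- Span of the columns of `A` indexed by `J`. -/
def colSpan {m n : ℕ} (A : Matrix (Fin m) (Fin n) ℝ) (J : Finset (Fin n)) :
    Submodule ℝ (EuclideanSpace ℝ (Fin m)) :=
  Submodule.span ℝ ((fun j => (WithLp.equiv 2 (Fin m → ℝ)).symm (col A j)) '' (J : Set (Fin n)))

/-- The projection `P_J^⊥ v` of `v` onto the orthogonal complement of the span of the
columns of `A` indexed by `J`. -/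
def projPerp {m n : ℕ} (A : Matrix (Fin m) (Fin n) ℝ) (J : Finset (Fin n)) (v : Fin m → ℝ) :
    Fin m → ℝ :=
  v - WithLp.equiv 2 (Fin m → ℝ)
    ((Submodule.orthogonalProjection (colSpan A J) ((WithLp.equiv 2 (Fin m → ℝ)).symm v) :
      EuclideanSpace ℝ (Fin m)))

/-- The OLS selection criterion value for index `j`, given measurements `y` and current
estimated support `Sk`. -/
def olsQuot {m n : ℕ} (A : Matrix (Fin m) (Fin n) ℝ) (y : Fin m → ℝ) (Sk : Finset (Fin n))
    (j : Fin n) : ℝ :=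
  |dot (projPerp A Sk y) (col A j)| / _root_.enorm (projPerp A Sk (col A j))

/-- The estimated support of OLS after `k` iterations (ties broken towards smaller index). -/
def olsSupp {m n : ℕ} (A : Matrix (Fin m) (Fin n) ℝ) (y : Fin m → ℝ) : ℕ → Finset (Fin n)
  | 0 => ∅
  | k + 1 =>
    let Sk := olsSupp A y k
    let cand := (Finset.univ \ Sk).filter
      (fun j => ∀ i ∈ Finset.univ \ Sk, olsQuot A y Sk i ≤ olsQuot A y Sk j)
    if h : cand.Nonempty then insert (cand.min' h) Sk else Sk

/-- The constant `C_K` from the paper. -/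
def CK (K : ℕ) : ℝ :=
  if K = 1 then 1 else if K = 2 then 2/3 else if K = 3 then 4/7 else 1 / Real.sqrt K

lemma alg1 (δ p q G : ℝ) (h0 : 0 ≤ δ) (h1 : δ ≤ 1/2) (hp : 1 - δ ≤ p) (hp2 : p ≤ 1 + δ)
    (hq : 1 - δ ≤ q) (hq1 : q ≤ 1)
    (hG1 : G ≤ (p - (1 - δ)) * (q - (1 - δ))) (hG2 : G ≤ (1 + δ - p) * (1 + δ - q)) :
    G ≤ δ ^ 2 * p ^ 2 * q := by
  rcases le_total p 1 with h | h
  · have ha : p - (1 - δ) ≤ δ * p ^ 2 := by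
      nlinarith [mul_nonneg (sub_nonneg.2 h) (by linarith : 0 ≤ 1 - 2 * δ),
        mul_nonneg h0 (sq_nonneg (p - 1))]
    have hb : q - (1 - δ) ≤ δ * q := by
      nlinarith [mul_nonneg (sub_nonneg.2 hq1) (by linarith : 0 ≤ 1 - δ)]
    have := mul_le_mul ha hb (by linarith) (by positivity)
    linarith [this]
  · obtain ⟨u, rfl⟩ : ∃ u, p = 1 + u := ⟨p - 1, by ring⟩
    obtain ⟨t, rfl⟩ : ∃ t, q = 1 - δ + t := ⟨q - (1 - δ), by ring⟩
    have hu : 0 ≤ u := by linarith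
    have hud : u ≤ δ := by linarith
    have ht : 0 ≤ t := by linarith
    have key : δ ^ 2 - u ^ 2 ≤ δ ^ 2 * (1 + u) ^ 2 * (1 - u) := by
      have e : δ ^ 2 * (1 + u) ^ 2 * (1 - u) - (δ ^ 2 - u ^ 2)
          = u ^ 2 * (1 - δ ^ 2) + δ ^ 2 * (u * (1 - u ^ 2)) := by ring
      have : 0 ≤ 1 - δ ^ 2 := by nlinarith
      have : 0 ≤ 1 - u ^ 2 := by nlinarith
      have : 0 ≤ u ^ 2 * (1 - δ ^ 2) + δ ^ 2 * (u * (1 - u ^ 2)) := by positivity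
      linarith
    rcases le_total t (δ - u) with h' | h'
    · have a1 : t * (1 - u) ≤ (1 - δ + t) * (δ - u) := by
        nlinarith [mul_nonneg (by linarith : 0 ≤ 1 - δ) (sub_nonneg.2 h')]
      have a2 := mul_le_mul_of_nonneg_left a1 (by linarith : 0 ≤ δ + u)
      have a3 := mul_le_mul_of_nonneg_right key (by linarith : 0 ≤ 1 - δ + t)
      have a4 : ((δ + u) * t) * (1 - u) ≤ (δ ^ 2 * (1 + u) ^ 2 * (1 - δ + t)) * (1 - u) := by
        linarith
      have a5 := le_of_mul_le_mul_right a4 (by linarith)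
      linarith
    · have a1 : (δ - u) * (2 * δ - t) ≤ (δ - u) * (δ + u) :=
        mul_le_mul_of_nonneg_left (by linarith) (by linarith)
      have a2 : δ ^ 2 * (1 + u) ^ 2 * (1 - u) ≤ δ ^ 2 * (1 + u) ^ 2 * (1 - δ + t) :=
        mul_le_mul_of_nonneg_left (by linarith) (by positivity)
      linarith

lemma disc1 (a b c : ℝ) (h : ∀ t : ℝ, 0 ≤ a + 2 * b * t + c * t ^ 2) : b ^ 2 ≤ a * c := by
  have := discrim_le_zero (a := c) (b := 2 * b) (c := a) (fun t => by linarith [h t])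
  unfold discrim at this
  linarith

lemma alg2 (δ Z N c q : ℝ) (h0 : 0 ≤ δ) (h1 : δ ≤ 1/2) (hZ : 0 < Z) (hq1 : q ≤ 1)
    (hl : ∀ t : ℝ, (1 - δ) * (Z + t ^ 2) ≤ N + 2 * c * t + q * t ^ 2)
    (hu : ∀ t : ℝ, N + 2 * c * t + q * t ^ 2 ≤ (1 + δ) * (Z + t ^ 2))
    (hq : 1 - δ ≤ q) :
    |c| / Real.sqrt q ≤ δ * N / Real.sqrt Z := by
  have d1 := disc1 (N - (1 - δ) * Z) c (q - (1 - δ)) (fun t => by linarith [hl t])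
  have d2 := disc1 ((1 + δ) * Z - N) (-c) ((1 + δ) - q) (fun t => by linarith [hu t])
  have l0 := hl 0
  have u0 := hu 0
  norm_num at l0 u0
  have hN : 0 ≤ N := le_trans (mul_nonneg (by linarith) hZ.le) l0
  have hqp : 0 < q := by linarith
  have hpN : N = N / Z * Z := by field_simp
  have hcN : c ^ 2 = c ^ 2 / Z * Z := by field_simp
  have := alg1 δ (N / Z) q (c ^ 2 / Z) h0 h1 (by rw [le_div_iff₀ hZ]; exact l0)
    (by rw [div_le_iff₀ hZ]; exact u0) hq hq1
    (by rw [div_le_iff₀ hZ]; rw [hpN] at d1; linarith)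
    (by rw [div_le_iff₀ hZ]; rw [hpN] at d2; linarith)
  have h3 : c ^ 2 * Z ≤ δ ^ 2 * N ^ 2 * q := by
    have e1 : c ^ 2 * Z = (c ^ 2 / Z) * Z ^ 2 := by field_simp
    have e2 : δ ^ 2 * N ^ 2 * q = (δ ^ 2 * (N / Z) ^ 2 * q) * Z ^ 2 := by field_simp
    rw [e1, e2]
    exact mul_le_mul_of_nonneg_right this (by positivity)
  rw [div_le_div_iff₀ (Real.sqrt_pos.2 hqp) (Real.sqrt_pos.2 hZ)]
  refine (pow_le_pow_iff_left₀ (by positivity) (by positivity) two_ne_zero).1 ?_ -- (by positivity)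
  rw [mul_pow, mul_pow, mul_pow, Real.sq_sqrt hZ.le, Real.sq_sqrt hqp.le, sq_abs]
  exact h3

lemma nsq_eq_dot {m : ℕ} (v : Fin m → ℝ) : nsq v = dot v v := by
  simp [nsq, dot, sq]

lemma dot_add_l {m : ℕ} (u v w : Fin m → ℝ) : dot (u + v) w = dot u w + dot v w := by
  simp [dot, add_mul, Finset.sum_add_distrib]

lemma dot_smul_l {m : ℕ} (t : ℝ) (u w : Fin m → ℝ) : dot (t • u) w = t * dot u w := by
  simp [dot, mul_assoc, Finset.mul_sum]

lemma dot_comm1 {m : ℕ} (u w : Fin m → ℝ) : dot u w = dot w u := by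
  simp [dot, mul_comm]

lemma nsq_add1 {m : ℕ} (u v : Fin m → ℝ) : nsq (u + v) = nsq u + 2 * dot u v + nsq v := by
  simp only [nsq, dot, Finset.mul_sum, ← Finset.sum_add_distrib]
  exact Finset.sum_congr rfl fun i _ => by simp only [Pi.add_apply]; ring

lemma nsq_nonneg1 {m : ℕ} (u : Fin m → ℝ) : 0 ≤ nsq u :=
  Finset.sum_nonneg fun i _ => sq_nonneg _

lemma colSpan_iff {m n : ℕ} (A : Matrix (Fin m) (Fin n) ℝ) (J : Finset (Fin n))
    (u : EuclideanSpace ℝ (Fin m)) :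
    u ∈ colSpan A J ↔ ∃ w : Fin n → ℝ, (∀ i, i ∉ J → w i = 0) ∧
      WithLp.equiv 2 (Fin m → ℝ) u = A.mulVec w := by
  constructor
  · intro h
    refine Submodule.span_induction ?_ ?_ ?_ ?_ h
    · rintro _ ⟨j, hj, rfl⟩
      refine ⟨Pi.single j 1, fun i hi => ?_, ?_⟩
      · rw [Pi.single_apply, if_neg]; rintro rfl; exact hi hj
      · ext i; simp [col]
    · exact ⟨0, by simp, by ext i; simp⟩
    · rintro a b _ _ ⟨w, hw, ha⟩ ⟨w', hw', hb⟩
      refine ⟨w + w', fun i hi => by simp [hw i hi, hw' i hi], ?_⟩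
      rw [Matrix.mulVec_add, ← ha, ← hb]; rfl
    · rintro c a _ ⟨w, hw, ha⟩
      refine ⟨c • w, fun i hi => by simp [hw i hi], ?_⟩
      rw [Matrix.mulVec_smul, ← ha]; rfl
  · rintro ⟨w, hw, hu⟩
    have : u = ∑ j ∈ J, w j • (WithLp.equiv 2 (Fin m → ℝ)).symm (col A j) := by
      apply (WithLp.equiv 2 (Fin m → ℝ)).injective
      rw [hu]
      ext i
      simp only [Matrix.mulVec, dotProduct, WithLp.equiv_apply, WithLp.ofLp_sum, Finset.sum_apply]
      rw [← Finset.sum_subset (Finset.subset_univ J)]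
      · exact Finset.sum_congr rfl fun j _ => by simp [col, mul_comm]
      · intro j _ hj; simp [hw j hj]
    rw [this]
    exact Submodule.sum_mem _ fun j hj => Submodule.smul_mem _ _ (Submodule.subset_span ⟨j, hj, rfl⟩)

lemma projPerp_spec {m n : ℕ} (A : Matrix (Fin m) (Fin n) ℝ) (J : Finset (Fin n))
    (v : Fin m → ℝ) :
    (∃ w : Fin n → ℝ, (∀ i, i ∉ J → w i = 0) ∧ projPerp A J v = v - A.mulVec w) ∧
    ∀ w : Fin n → ℝ, (∀ i, i ∉ J → w i = 0) → dot (projPerp A J v) (A.mulVec w) = 0 := by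
  constructor
  · obtain ⟨w, hw, h⟩ := (colSpan_iff A J _).1
      (Submodule.orthogonalProjection (colSpan A J) ((WithLp.equiv 2 (Fin m → ℝ)).symm v)).2
    exact ⟨w, hw, by rw [projPerp, h]⟩
  · intro w hw
    have hm : (WithLp.equiv 2 (Fin m → ℝ)).symm (A.mulVec w) ∈ colSpan A J :=
      (colSpan_iff A J _).2 ⟨w, hw, rfl⟩
    have := Submodule.starProjection_inner_eq_zero
      ((WithLp.equiv 2 (Fin m → ℝ)).symm v) _ hm
    simp only [PiLp.inner_apply] at this
    rw [← this, dot]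
    refine Finset.sum_congr rfl fun i _ => ?_
    simp [projPerp, mul_comm]

theorem stmt1 {m n K : ℕ} (A : Matrix (Fin m) (Fin n) ℝ) (δ : ℝ)
    (hδ0 : 0 ≤ δ) (hδ : δ ≤ 1 / 2)
    (hcols : ∀ j, nsq (col A j) = 1)
    (hRIP : RIP A (K + 1) δ)
    (x : Fin n → ℝ) (S : Finset (Fin n)) (hS : vsupp x = S) (hK : S.card ≤ K)
    (S' : Finset (Fin n)) (hS' : S' ⊂ S)
    (r : Fin m → ℝ) (hr : r = projPerp A S' (A.mulVec x))
    (j : Fin n) (hj : j ∉ S) :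
    |dot r (col A j)| / _root_.enorm (projPerp A S' (col A j)) ≤ δ * nsq r / rnorm x (S \ S') := by
  have hjS' : j ∉ S' := fun h => hj (hS'.1 h)
  have hxS : ∀ i, i ∉ S → x i = 0 := by
    intro i hi
    by_contra h
    exact hi (hS ▸ by simp [vsupp, h])
  have hxj : x j = 0 := hxS j hj
  obtain ⟨⟨w1, hw1, e1⟩, o1⟩ := projPerp_spec A S' (A.mulVec x)
  obtain ⟨⟨w2, hw2, e2⟩, o2⟩ := projPerp_spec A S' (col A j)
  rw [← hr] at e1 o1
  set b := projPerp A S' (col A j) with hb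
  have hcol : col A j = A.mulVec (Pi.single j 1) := by ext i; simp [col]
  have hdot : dot r (col A j) = dot r b := by
    have : col A j = b + A.mulVec w2 := by rw [e2]; simp
    rw [this, dot_comm1, dot_add_l, dot_comm1 (A.mulVec w2), o1 w2 hw2, dot_comm1]; simp
  have hq1 : nsq b ≤ 1 := by
    have h := hcols j
    have h' : col A j = b + A.mulVec w2 := by rw [e2]; simp
    rw [h', nsq_add1, o2 w2 hw2] at h
    linarith [nsq_nonneg1 (A.mulVec w2)]
  -- RIP for vectors supported on S and j
  have hcard : ∀ y : Fin n → ℝ, (∀ i, i ∉ S → i ≠ j → y i = 0) → (vsupp y).card ≤ K + 1 := by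
    intro y hy
    have : vsupp y ⊆ insert j S := by
      intro i hi
      by_contra hn
      simp only [Finset.mem_insert, not_or] at hn
      simp only [vsupp, Finset.mem_filter] at hi
      exact hi.2 (hy i hn.2 hn.1)
    calc _ ≤ _ := Finset.card_le_card this
      _ ≤ S.card + 1 := Finset.card_insert_le _ _
      _ ≤ _ := by omega
  have hexp : ∀ s t : ℝ, nsq (s • r + t • b) = s ^ 2 * nsq r + 2 * dot r b * (s * t) + nsq b * t ^ 2 := by
    intro s t
    rw [nsq_add1, nsq_eq_dot (s • r), nsq_eq_dot (t • b), dot_smul_l, dot_smul_l, dot_smul_l,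
      dot_comm1 r (s • r), dot_comm1 r (t • b), dot_comm1 b (t • b), dot_smul_l, dot_smul_l,
      dot_smul_l, nsq_eq_dot, nsq_eq_dot, dot_comm1 b r]
    ring
  set z : Fin n → ℝ := fun i => if i ∈ S' then 0 else x i with hz
  have hzsum : ∀ s t : ℝ, ∑ i, ((s • z + t • Pi.single j 1 : Fin n → ℝ) i) ^ 2
      = s ^ 2 * rsq x (S \ S') + t ^ 2 := by
    intro s t
    have h1 : ∀ i, ((s • z + t • Pi.single j 1 : Fin n → ℝ) i) ^ 2
        = s ^ 2 * (if i ∈ S \ S' then x i ^ 2 else 0) + (if i = j then t ^ 2 else 0) := by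
      intro i
      by_cases hij : i = j
      · subst hij
        simp [hz, hj, hxj]
      · by_cases hi' : i ∈ S'
        · simp [hz, hij, hi']
        · by_cases hi : i ∈ S
          · simp [hz, hij, hi', hi, mul_pow]
          · simp [hz, hij, hi', hi, hxS i hi]
    rw [Finset.sum_congr rfl fun i _ => h1 i, Finset.sum_add_distrib, ← Finset.mul_sum,
      Finset.sum_ite_mem, Finset.univ_inter]
    simp [rsq]
  have hy : ∀ s t : ℝ, s • r + t • b =
      A.mulVec (s • (x - w1) + t • (Pi.single j 1 - w2)) := by
    intro s t
    rw [Matrix.mulVec_add, Matrix.mulVec_smul, Matrix.mulVec_smul, Matrix.mulVec_sub,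
      Matrix.mulVec_sub, e1, e2, hcol]
  have hl : ∀ s t : ℝ, (1 - δ) * (s ^ 2 * rsq x (S \ S') + t ^ 2) ≤ nsq (s • r + t • b) := by
    intro s t
    rw [hy]
    refine le_trans ?_ (hRIP _ (hcard _ ?_)).1
    · apply mul_le_mul_of_nonneg_left _ (by linarith)
      rw [← hzsum]
      apply Finset.sum_le_sum
      intro i _
      by_cases hi' : i ∈ S'
      · have : i ≠ j := fun h => hjS' (h ▸ hi')
        simp [hz, hi', this]
        positivity
      · simp [hz, hi', hw1 i hi', hw2 i hi']
    · intro i hi hij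
      have hi' : i ∉ S' := fun h => hi (hS'.1 h)
      simp [hxS i hi, hij, hw1 i hi', hw2 i hi']
  have hu : ∀ s t : ℝ, nsq (s • r + t • b) ≤ (1 + δ) * (s ^ 2 * rsq x (S \ S') + t ^ 2) := by
    intro s t
    have hR := (hRIP (s • z + t • Pi.single j 1) (hcard _ (by
      intro i hi hij
      simp [hz, hij, hxS i hi]))).2
    rw [hzsum] at hR
    refine le_trans ?_ hR
    set d : Fin n → ℝ := (s • z + t • Pi.single j 1) - (s • (x - w1) + t • (Pi.single j 1 - w2))
      with hd
    have hdS : ∀ i, i ∉ S' → d i = 0 := by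
      intro i hi
      simp [hd, hz, hi, hw1 i hi, hw2 i hi]
    have hA : A.mulVec (s • z + t • Pi.single j 1) = (s • r + t • b) + A.mulVec d := by
      rw [hd, Matrix.mulVec_sub, hy]; abel
    rw [hA]
    change _ ≤ nsq _
    rw [nsq_add1 (s • r + t • b), dot_add_l, dot_smul_l, dot_smul_l, o1 d hdS, o2 d hdS]
    linarith [nsq_nonneg1 (A.mulVec d)]
  have hZ : 0 < rsq x (S \ S') := by
    obtain ⟨i, hi, hi'⟩ := Finset.exists_of_ssubset hS'
    have hxi : x i ≠ 0 := by
      rw [← hS] at hi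
      simpa [vsupp] using hi
    exact Finset.sum_pos' (fun _ _ => sq_nonneg _) ⟨i, by simp [hi, hi'], by positivity⟩
  rw [hdot]
  refine alg2 δ _ _ _ _ hδ0 hδ hZ hq1 (fun t => ?_) (fun t => ?_) ?_
  · have := hl 1 t; rw [hexp] at this; linarith
  · have := hu 1 t; rw [hexp] at this; linarith
  · have := hl 0 1; rw [hexp] at this; linarith
end
end

section
/- Let δ ∈ [2/3, 1) and let A ∈ ℝ^{m×3} be any matrix with AᵀA = G, where G is the 3×3 matrix with unit diagonal, G₁₂ = G₁₃ = δ/2, and G₂₃ = −δ/2 (such A exists since G is positive semidefinite). Then: (a) every column of A has unit ℓ₂-norm; (b) A satisfies the RIP of order 3 with constant δ, and every δ' ∈ [0,1) with which A satisfies the RIP of order 3 satisfies δ' ≥ δ; and (c) for the 2-sparse vector x = (0, 1, 1)ᵀ and y = A x, one has |⟨y, a_1⟩| = δ, |⟨y, a_2⟩| = |⟨y, a_3⟩| = 1 − δ/2, and δ ≥ 1 − δ/2, so the incorrect index 1 attains the maximum of j ↦ |⟨y, a_j⟩|. -/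
open Finset

noncomputable section

/-- the `K = 2` counterexample. -/
theorem stmt13 {m : ℕ} (δ : ℝ) (hδ1 : 2 / 3 ≤ δ) (hδ2 : δ < 1)
    (A : Matrix (Fin m) (Fin 3) ℝ)
    (hA : A.transpose * A = !![1, δ/2, δ/2; δ/2, 1, -(δ/2); δ/2, -(δ/2), 1])
    (x : Fin 3 → ℝ) (hx : x = ![0, 1, 1])
    (y : Fin m → ℝ) (hy : y = A.mulVec x) :
    (∀ j, nsq (col A j) = 1) ∧
    RIP A 3 δ ∧
    (∀ δ' : ℝ, 0 ≤ δ' → δ' < 1 → RIP A 3 δ' → δ ≤ δ') ∧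
    |dot y (col A 0)| = δ ∧
    |dot y (col A 1)| = 1 - δ / 2 ∧
    |dot y (col A 2)| = 1 - δ / 2 ∧
    1 - δ / 2 ≤ δ ∧
    (∀ j, |dot y (col A j)| ≤ |dot y (col A 0)|) := by
  have e : ∀ a b, ∑ i, A i a * A i b = (!![1, δ/2, δ/2; δ/2, 1, -(δ/2); δ/2, -(δ/2), 1] : Matrix (Fin 3) (Fin 3) ℝ) a b := by
    intro a b
    rw [← hA]
    simp [Matrix.mul_apply]
  have e00 := e 0 0
  have e01 := e 0 1
  have e02 := e 0 2
  have e11 := e 1 1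
  have e12 := e 1 2
  have e22 := e 2 2
  simp at e00 e01 e02 e11 e12 e22
  have q : ∀ z : Fin 3 → ℝ, ∑ i, (A.mulVec z) i ^ 2 =
      z 0 ^ 2 + z 1 ^ 2 + z 2 ^ 2 + δ * (z 0 * z 1 + z 0 * z 2 - z 1 * z 2) := by
    intro z
    have h : ∑ i, (A.mulVec z) i ^ 2 =
        z 0 ^ 2 * (∑ i, A i 0 * A i 0) + z 1 ^ 2 * (∑ i, A i 1 * A i 1)
        + z 2 ^ 2 * (∑ i, A i 2 * A i 2) + 2 * z 0 * z 1 * (∑ i, A i 0 * A i 1)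
        + 2 * z 0 * z 2 * (∑ i, A i 0 * A i 2) + 2 * z 1 * z 2 * (∑ i, A i 1 * A i 2) := by
      simp only [Finset.mul_sum, ← Finset.sum_add_distrib]
      refine Finset.sum_congr rfl fun i _ => ?_
      simp only [Matrix.mulVec, dotProduct, Fin.sum_univ_three]
      ring
    rw [h, e00, e01, e02, e11, e12, e22]
    ring
  have d : ∀ j, dot y (col A j) = ∑ i, A i 1 * A i j + ∑ i, A i 2 * A i j := by
    intro j
    rw [← Finset.sum_add_distrib]
    refine Finset.sum_congr rfl fun i _ => ?_
    simp only [hy, hx, col, Matrix.mulVec, dotProduct, Fin.sum_univ_three]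
    simp
    ring
  have d0 : |dot y (col A 0)| = δ := by
    rw [d, e 1 0, e 2 0]
    simp
    linarith
  have d1 : |dot y (col A 1)| = 1 - δ / 2 := by
    rw [d, e 1 1, e 2 1]
    simp
    rw [abs_of_nonneg (by linarith)]
    ring
  have d2 : |dot y (col A 2)| = 1 - δ / 2 := by
    rw [d, e 1 2, e 2 2]
    simp
    rw [abs_of_nonneg (by linarith)]
    ring
  refine ⟨?_, ?_, ?_, d0, d1, d2, by linarith, ?_⟩
  · intro j
    have := e j j
    simp only [nsq, col, pow_two]
    rw [this]
    fin_cases j <;> simp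
  · intro z _
    rw [q z, Fin.sum_univ_three]
    have hp : 0 ≤ δ := by linarith
    constructor
    · have := mul_nonneg hp (add_nonneg (add_nonneg (sq_nonneg (z 0 + z 1)) (sq_nonneg (z 0 + z 2))) (sq_nonneg (z 1 - z 2)))
      linarith
    · have := mul_nonneg hp (add_nonneg (add_nonneg (add_nonneg (sq_nonneg (z 0)) (sq_nonneg (z 1))) (sq_nonneg (z 2))) (sq_nonneg (z 1 + z 2 - z 0)))
      linarith
  · intro δ' _ _ h
    have h1 := (h ![-1, 1, 1] (by simpa using Finset.card_le_univ (vsupp ![(-1 : ℝ), 1, 1]))).1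
    rw [q, Fin.sum_univ_three] at h1
    simp at h1
    linarith
  · intro j
    rw [d0]
    fin_cases j
    · exact d0.le
    · exact d1.le.trans (by linarith)
    · exact d2.le.trans (by linarith)
end
end

section
/- Let δ ∈ [4/7, 1) and let A ∈ ℝ^{m×4} be any matrix with AᵀA = G, where G is the 4×4 matrix with unit diagonal, G₁ⱼ = Gⱼ₁ = δ/2 for j ∈ {2,3,4}, and G_{jk} = −δ/8 for distinct j, k ∈ {2,3,4} (such A exists since G is positive semidefinite). Then: (a) every column of A has unit ℓ₂-norm; (b) A satisfies the RIP of order 4 with constant δ, and every δ' ∈ [0,1) with which A satisfies the RIP of order 4 satisfies δ' ≥ δ; and (c) for the 3-sparse vector x = (0, 1, 1, 1)ᵀ and y = A x, one has |⟨y, a_1⟩| = 3δ/2, |⟨y, a_j⟩| = 1 − δ/4 for j ∈ {2,3,4}, and 3δ/2 ≥ 1 − δ/4, so the incorrect index 1 attains the maximum of j ↦ |⟨y, a_j⟩|. -/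
open Finset

noncomputable section

/-- the `K = 3` counterexample. -/
theorem stmt14 {m : ℕ} (δ : ℝ) (hδ1 : 4 / 7 ≤ δ) (hδ2 : δ < 1)
    (A : Matrix (Fin m) (Fin 4) ℝ)
    (hA : A.transpose * A = !![1, δ/2, δ/2, δ/2;
                      δ/2, 1, -(δ/8), -(δ/8);
                      δ/2, -(δ/8), 1, -(δ/8);
                      δ/2, -(δ/8), -(δ/8), 1])
    (x : Fin 4 → ℝ) (hx : x = ![0, 1, 1, 1])
    (y : Fin m → ℝ) (hy : y = A.mulVec x) :
    (∀ j, nsq (col A j) = 1) ∧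
    RIP A 4 δ ∧
    (∀ δ' : ℝ, 0 ≤ δ' → δ' < 1 → RIP A 4 δ' → δ ≤ δ') ∧
    |dot y (col A 0)| = 3 * δ / 2 ∧
    (∀ j, j ≠ 0 → |dot y (col A j)| = 1 - δ / 4) ∧
    1 - δ / 4 ≤ 3 * δ / 2 ∧
    (∀ j, |dot y (col A j)| ≤ |dot y (col A 0)|) := by
  have hG : ∀ j k, ∑ i, A i j * A i k = (A.transpose * A) j k := by
    intro j k; simp [Matrix.mul_apply]
  rw [hA] at hG
  have hdot : ∀ (z : Fin 4 → ℝ) (j : Fin 4), dot (A.mulVec z) (col A j)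
      = ∑ k, z k * ∑ i, A i k * A i j := by
    intro z j
    simp only [dot, col, Matrix.mulVec, dotProduct, Finset.sum_mul, Finset.mul_sum]
    rw [Finset.sum_comm]
    exact Finset.sum_congr rfl fun k _ => Finset.sum_congr rfl fun i _ => by ring
  have hQ0 : ∀ z : Fin 4 → ℝ, ∑ i, (A.mulVec z) i ^ 2
      = ∑ j, z j * dot (A.mulVec z) (col A j) := by
    intro z
    simp only [dot, col, Finset.mul_sum]
    rw [Finset.sum_comm]
    refine Finset.sum_congr rfl fun i _ => ?_
    rw [sq]
    nth_rewrite 2 [Matrix.mulVec]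
    simp only [dotProduct, Finset.mul_sum]
    exact Finset.sum_congr rfl fun k _ => by ring
  have hQ : ∀ z : Fin 4 → ℝ, ∑ i, (A.mulVec z) i ^ 2
      = z 0 ^ 2 + z 1 ^ 2 + z 2 ^ 2 + z 3 ^ 2 + δ * (z 0 * (z 1 + z 2 + z 3)
        - (z 1 * z 2 + z 1 * z 3 + z 2 * z 3) / 4) := by
    intro z
    rw [hQ0]
    simp only [hdot, hG, Fin.sum_univ_four]
    simp
    ring
  have h0 : |dot y (col A 0)| = 3 * δ / 2 := by
    rw [hy, hx, hdot]
    simp only [hG, Fin.sum_univ_four]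
    simp
    rw [abs_of_nonneg (by linarith)]
    ring
  have hj : ∀ j, j ≠ 0 → |dot y (col A j)| = 1 - δ / 4 := by
    intro j hj
    have : dot y (col A j) = 1 - δ / 4 := by
      rw [hy, hx, hdot]
      simp only [hG, Fin.sum_univ_four]
      fin_cases j
      · exact absurd rfl hj
      all_goals simp
      all_goals ring
    rw [this, abs_of_nonneg (by linarith)]
  refine ⟨?_, ?_, ?_, h0, hj, by linarith, ?_⟩
  · intro j
    have := hG j j
    simp only [nsq, col, sq]
    rw [this]
    fin_cases j <;> simp
  · intro z _
    rw [hQ]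
    simp only [Fin.sum_univ_four]
    have hd : 0 ≤ δ := by linarith
    constructor
    · have h : 0 ≤ (z 0 + (z 1 + z 2 + z 3) / 2) ^ 2
          + 3 / 8 * ((z 1 - z 2) ^ 2 + (z 1 - z 3) ^ 2 + (z 2 - z 3) ^ 2) := by positivity
      nlinarith [mul_nonneg hd h]
    · have h : 0 ≤ (z 0 - (z 1 + z 2 + z 3) / 2) ^ 2
          + 1 / 8 * ((z 1 - z 2) ^ 2 + (z 1 - z 3) ^ 2 + (z 2 - z 3) ^ 2)
          + 1 / 2 * (z 1 ^ 2 + z 2 ^ 2 + z 3 ^ 2) := by positivity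
      nlinarith [mul_nonneg hd h]
  · intro δ' _ _ h
    have h1 := (h ![-3, 2, 2, 2] (by simpa using Finset.card_le_univ (vsupp ![(-3:ℝ), 2, 2, 2]))).1
    rw [hQ] at h1
    simp [Fin.sum_univ_four] at h1
    linarith
  · intro j
    by_cases h : j = 0
    · rw [h]
    · rw [h0, hj j h]; linarith
end
end
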